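/- Suppose X is a c-quasiconvex metric space, G ⊊ X is a b-uniform domain, γ is a (ν,h)-solid arc in G with endpoints x, y, and x₀ ∈ γ satisfies δ_G(x₀) = max_{p∈γ} δ_G(p). Then there is a constant μ₂ = μ₂(b,ν,h) ≥ 1 such that diam(γ[x,u]) ≤ μ₂·δ_G(u) for all u ∈ γ[x, x₀], and diam(γ[y,v]) ≤ μ₂·δ_G(v) for all v ∈ γ[y, x₀]. -/

import Mathlib

open Metric Set Filter

section QHDefs

variable {X : Type*} [MetricSpace X] {Y : Type*} [MetricSpace Y]

/-- Distance to the boundary of `G`. -/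
noncomputable def bdist (G : Set X) (z : X) : ℝ := Metric.infDist z (frontier G)

/-- A unit-speed (1-Lipschitz, arclength-parametrized) rectifiable curve in `G`
from `x` to `y`, parametrized on `[0, L]`, where `L` is its length. -/
structure CurveIn (G : Set X) (γ : ℝ → X) (L : ℝ) (x y : X) : Prop where
  nonneg : 0 ≤ L
  lip : LipschitzOnWith 1 γ (Set.Icc 0 L)
  source : γ 0 = x
  target : γ L = y
  mem : ∀ t ∈ Set.Icc 0 L, γ t ∈ G

/-- Quasihyperbolic length of the subcurve `γ|[s,t]` in `G`: `∫_γ |dz|/δ_G(z)`. -/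
noncomputable def qhLengthOn (G : Set X) (γ : ℝ → X) (s t : ℝ) : ℝ :=
  ∫ u in s..t, 1 / bdist G (γ u)

/-- Quasihyperbolic length of a curve parametrized on `[0,L]`. -/
noncomputable def qhLength (G : Set X) (γ : ℝ → X) (L : ℝ) : ℝ := qhLengthOn G γ 0 L

/-- Quasihyperbolic distance in `G`. -/
noncomputable def qhDist (G : Set X) (x y : X) : ℝ :=
  sInf {l | ∃ γ L, CurveIn G γ L x y ∧ qhLength G γ L = l}

/-- `X` is a `c`-quasiconvex metric space. -/
def QCSpace (c : ℝ) (X : Type*) [MetricSpace X] : Prop :=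
  ∀ x y : X, ∃ γ L, CurveIn (Set.univ : Set X) γ L x y ∧ L ≤ c * dist x y

/-- A set `G` is `c`-quasiconvex. -/
def QCSet (c : ℝ) (G : Set X) : Prop :=
  ∀ x ∈ G, ∀ y ∈ G, ∃ γ L, CurveIn G γ L x y ∧ L ≤ c * dist x y

/-- A domain: a nonempty connected open set. -/
def IsDomainSet (G : Set X) : Prop := IsOpen G ∧ IsConnected G

/-- A proper domain: a nonempty connected open set, different from the whole space. -/
def IsProperDomain (G : Set X) : Prop := IsOpen G ∧ IsConnected G ∧ G ≠ Set.univ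

/-- `G` is an `a`-John domain: each pair of points is joined by a rectifiable arc
satisfying the cone condition. -/
def IsJohn (a : ℝ) (G : Set X) : Prop :=
  ∀ x ∈ G, ∀ y ∈ G, ∃ γ L, CurveIn G γ L x y ∧
    ∀ t ∈ Set.Icc 0 L, min t (L - t) ≤ a * bdist G (γ t)

/-- `G` is a `b`-uniform domain: each pair of points is joined by a double `b`-cone arc. -/
def IsUniform (b : ℝ) (G : Set X) : Prop :=
  ∀ x ∈ G, ∀ y ∈ G, ∃ γ L, CurveIn G γ L x y ∧ L ≤ b * dist x y ∧
    ∀ t ∈ Set.Icc 0 L, min t (L - t) ≤ b * bdist G (γ t)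

/-- `G` is a locally `a`-John domain. -/
def LocallyJohn (a : ℝ) (G : Set X) : Prop :=
  ∀ x ∈ G, ∀ r : ℝ, 0 < r → r ≤ bdist G x → IsJohn a (Metric.ball x r)

/-- The `h`-coarse quasihyperbolic length of the subcurve `γ|[s,t]` in `G`:
the supremum of sums `Σ k_G(x_{j-1},x_j)` over `h`-coarse sequences of successive
points of the arc (with the convention that it is `0` if there are none). -/
noncomputable def coarseQHLength (G : Set X) (γ : ℝ → X) (s t h : ℝ) : ℝ :=
  sSup {S | ∃ n : ℕ, 0 < n ∧ ∃ u : ℕ → ℝ,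
    (∀ i < n, u i ≤ u (i + 1)) ∧ (∀ i ≤ n, u i ∈ Set.Icc s t) ∧
    (∀ i < n, h ≤ qhDist G (γ (u i)) (γ (u (i + 1)))) ∧
    S = ∑ i ∈ Finset.range n, qhDist G (γ (u i)) (γ (u (i + 1)))}

/-- `γ` (parametrized on `[0,L]`) is a `(ν,h)`-solid arc in `G`. -/
def SolidArc (G : Set X) (γ : ℝ → X) (L ν h : ℝ) : Prop :=
  ∀ s t : ℝ, 0 ≤ s → s ≤ t → t ≤ L →
    coarseQHLength G γ s t h ≤ ν * qhDist G (γ s) (γ t)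

/-- `γ` (parametrized on `[0,L]`) is an `ε`-short arc in `G`. -/
def ShortArc (G : Set X) (γ : ℝ → X) (L ε : ℝ) : Prop :=
  qhLength G γ L ≤ qhDist G (γ 0) (γ L) + ε

/-- A map is weakly `H`-quasisymmetric. -/
def WeakQS (H : ℝ) (f : X → Y) : Prop :=
  ∀ x a b : X, dist x a ≤ dist x b → dist (f x) (f a) ≤ H * dist (f x) (f b)

/-- Image of a subset `D ⊆ G` under a homeomorphism `f : G ≃ₜ G'`, as a subset of `Y`. -/
def imSet {G : Set X} {G' : Set Y} (f : ↥G ≃ₜ ↥G') (D : Set X) : Set Y :=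
  Subtype.val '' (f '' (Subtype.val ⁻¹' D))

/-- `f : G ≃ₜ G'` is `M`-quasihyperbolic. -/
def MQH (M : ℝ) {G : Set X} {G' : Set Y} (f : ↥G ≃ₜ ↥G') : Prop :=
  ∀ x y : ↥G, (1 / M) * qhDist G ↑x ↑y ≤ qhDist G' ↑(f x) ↑(f y) ∧
    qhDist G' ↑(f x) ↑(f y) ≤ M * qhDist G ↑x ↑y

/-- `f : G ≃ₜ G'` is `C`-coarsely `M`-quasihyperbolic. -/
def CQH (M C : ℝ) {G : Set X} {G' : Set Y} (f : ↥G ≃ₜ ↥G') : Prop :=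
  ∀ x y : ↥G, (qhDist G ↑x ↑y - C) / M ≤ qhDist G' ↑(f x) ↑(f y) ∧
    qhDist G' ↑(f x) ↑(f y) ≤ M * qhDist G ↑x ↑y + C

/-- `f : G ≃ₜ G'` is freely `φ`-quasiconformal: in every subdomain, the
quasihyperbolic distances of `f` and `f⁻¹` are controlled by `φ`. -/
def FQC (φ : ℝ → ℝ) {G : Set X} {G' : Set Y} (f : ↥G ≃ₜ ↥G') : Prop :=
  ∀ D : Set X, ∀ hD : D ⊆ G, IsDomainSet D →
    ∀ x : X, ∀ hx : x ∈ D, ∀ y : X, ∀ hy : y ∈ D,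
      qhDist (imSet f D) ↑(f ⟨x, hD hx⟩) ↑(f ⟨y, hD hy⟩) ≤ φ (qhDist D x y) ∧
      qhDist D x y ≤ φ (qhDist (imSet f D) ↑(f ⟨x, hD hx⟩) ↑(f ⟨y, hD hy⟩))

end QHDefs

/-!
In a uniform domain the quasihyperbolic distance of two points is at most logarithmic in their
distance relative to their depth, whereas the coarse length of an arc that stays at depth at most
`2r` is at least linear in the distance of its ends relative to `r`. A solid arc between two points
of depth at least `r` that stays at depth at most `2r` is therefore confined to a set of diameter
`≲ r` and of depth `≳ r`. On the way from an endpoint to the deepest point `x₀` the arc passes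
through such layers of scales `…, r/4, r/2, r`, and the geometric series of their diameters is
comparable to its last term, the depth of the current point.
-/

open Real

section ContinuousOnIcc

variable {α δ : Type*} [ConditionallyCompleteLinearOrder α] [TopologicalSpace α] [OrderTopology α]
  [DenselyOrdered α] [LinearOrder δ] [TopologicalSpace δ] [OrderClosedTopology δ]
  {f : α → δ} {a b : α}

lemma exists_first_hit (hab : a ≤ b) (hf : ContinuousOn f (Icc a b)) {r : δ}
    (hr : r ∈ Icc (f a) (f b)) : ∃ q ∈ Icc a b, f q = r ∧ ∀ z ∈ Ico a q, f z < r := by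
  have hcomp : IsCompact (Icc a b ∩ f ⁻¹' {r}) :=
    isCompact_Icc.of_isClosed_subset
      (hf.preimage_isClosed_of_isClosed isClosed_Icc isClosed_singleton) inter_subset_left
  obtain ⟨q, ⟨hq, hfq⟩, hmin⟩ := hcomp.exists_isLeast (intermediate_value_Icc hab hf hr)
  refine ⟨q, hq, hfq, fun z hz => ?_⟩
  by_contra! hrz
  have hzb : z ≤ b := hz.2.le.trans hq.2
  obtain ⟨w, hw, hfw⟩ :=
    intermediate_value_Icc hz.1 (hf.mono (Icc_subset_Icc_right hzb)) ⟨hr.1, hrz⟩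
  exact (hw.2.trans_lt hz.2).not_ge (hmin ⟨⟨hw.1, hw.2.trans hzb⟩, hfw⟩)

lemma exists_monotoneOn_rightInvOn (hab : a ≤ b) (hf : ContinuousOn f (Icc a b)) :
    ∃ u : δ → α, MonotoneOn u (Icc (f a) (f b)) ∧ MapsTo u (Icc (f a) (f b)) (Icc a b) ∧
      RightInvOn u f (Icc (f a) (f b)) := by
  have : Nonempty α := ⟨a⟩
  choose! u hu hfu hlt using fun r hr => exists_first_hit hab hf (r := r) hr
  refine ⟨u, fun r hr r' hr' hrr' => ?_, hu, hfu⟩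
  by_contra! h
  exact (hfu r' hr' ▸ hlt r hr (u r') ⟨(hu r' hr').1, h⟩).not_ge hrr'

end ContinuousOnIcc

section DyadicLayers

variable {α X : Type*} [PseudoMetricSpace X] {g : α → X} {f : α → ℝ} {C : ℝ}

/-- The layer condition for a curve `g` with height function `f`: whenever the height along an
interval `[s, t]` with ends in `I` is at least `r` at both ends and at most `2 * r` throughout,
the curve moves by at most `C * r` on `[s, t]` and the height stays at least `r / C`. Having no
preferred direction, the condition is invariant under reversal of the order of `α`. -/
def HasLayerBound [Preorder α] (C : ℝ) (g : α → X) (f : α → ℝ) (I : Set α) : Prop :=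
  ∀ ⦃r : ℝ⦄, 0 < r → ∀ ⦃s⦄, s ∈ I → ∀ ⦃t⦄, t ∈ I → r ≤ f s → r ≤ f t →
    (∀ z ∈ Icc s t, f z ≤ 2 * r) →
      ∀ ⦃z⦄, z ∈ Icc s t → r ≤ C * f z ∧ ∀ ⦃w⦄, w ∈ Icc s t → dist (g z) (g w) ≤ C * r

namespace HasLayerBound

lemma mono [Preorder α] {I J : Set α} (h : HasLayerBound C g f J) (hIJ : I ⊆ J) :
    HasLayerBound C g f I :=
  fun _ hr _ hs _ ht => h hr (hIJ hs) (hIJ ht)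

lemma dual [Preorder α] {I : Set α} (h : HasLayerBound C g f I) :
    HasLayerBound C (g ∘ OrderDual.ofDual) (f ∘ OrderDual.ofDual) (OrderDual.ofDual ⁻¹' I) := by
  intro r hr s hs t ht hrs hrt hle z hz
  have hz' := h hr ht hs hrt hrs (fun w hw => hle w hw.symm) hz.symm
  exact ⟨hz'.1, fun w hw => hz'.2 hw.symm⟩

lemma dist_le_of_half_le [Preorder α] {I : Set α} (h : HasLayerBound C g f I) {s p z : α}
    (hs : s ∈ I) (hp : p ∈ I) (hfp : 0 < f p) (hsp : f p / 2 ≤ f s)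
    (hmax : ∀ w ∈ Icc s p, f w ≤ f p) (hz : z ∈ Icc s p) :
    dist (g z) (g p) ≤ C * (f p / 2) :=
  (h (half_pos hfp) hs hp hsp (half_le_self hfp.le) (fun w hw => by linarith [hmax w hw]) hz).2
    ⟨hz.1.trans hz.2, le_rfl⟩

variable [ConditionallyCompleteLinearOrder α] [TopologicalSpace α] [OrderTopology α]
  [DenselyOrdered α] {a b u : α}

lemma dist_le_of_forall_le (h : HasLayerBound C g f (Icc a b)) (hC : 0 ≤ C)
    (hf : ContinuousOn f (Icc a b)) (ha : 0 < f a) {p z : α} (hp : p ∈ Icc a b)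
    (hmax : ∀ w ∈ Icc a p, f w ≤ f p) (hz : z ∈ Icc a p) : dist (g z) (g p) ≤ C * f p := by
  obtain ⟨n, hn⟩ := pow_unbounded_of_one_lt (f p / f a) one_lt_two
  rw [div_lt_iff₀ ha] at hn
  induction n generalizing p z with
  | zero => exact absurd (hmax a ⟨le_rfl, hp.1⟩) (by simpa using hn)
  | succ n ih =>
    have hfp : 0 < f p := ha.trans_le (hmax a ⟨le_rfl, hp.1⟩)
    have haI : a ∈ Icc a b := ⟨le_rfl, hp.1.trans hp.2⟩
    have hhalf : C * (f p / 2) + C * (f p / 2) = C * f p := by ring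
    have hhalf_nonneg : 0 ≤ C * (f p / 2) := by positivity
    rcases le_total (f p / 2) (f a) with hle | hle
    · linarith [h.dist_le_of_half_le haI hp hfp hle hmax hz]
    obtain ⟨q, hq, hfq, hlt⟩ := exists_first_hit hp.1 (hf.mono (Icc_subset_Icc_right hp.2))
      ⟨hle, half_le_self hfp.le⟩
    have hqI : q ∈ Icc a b := ⟨hq.1, hq.2.trans hp.2⟩
    have hstep : ∀ w ∈ Icc q p, dist (g w) (g p) ≤ C * (f p / 2) := fun w hw =>
      h.dist_le_of_half_le hqI hp hfp hfq.ge (fun v hv => hmax v ⟨hq.1.trans hv.1, hv.2⟩) hw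
    rcases le_total z q with hzq | hqz
    · have hqmax : ∀ w ∈ Icc a q, f w ≤ f q := fun w hw =>
        hw.2.eq_or_lt.elim (fun e => e ▸ le_rfl) fun hwq => hfq ▸ (hlt w ⟨hw.1, hwq⟩).le
      have hzq' : dist (g z) (g q) ≤ C * (f p / 2) :=
        hfq ▸ ih hqI hqmax ⟨hz.1, hzq⟩ (by rw [hfq]; rw [pow_succ] at hn; linarith)
      linarith [dist_triangle (g z) (g q) (g p), hstep q ⟨le_rfl, hq.2⟩]
    · linarith [hstep z ⟨hqz, hz.2⟩]

lemma diam_image_Icc_left_le (h : HasLayerBound C g f (Icc a b)) (hC : 0 ≤ C)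
    (hf : ContinuousOn f (Icc a b)) (ha : 0 < f a) (hmax : ∀ z ∈ Icc a b, f z ≤ f b)
    (hu : u ∈ Icc a b) : diam (g '' Icc a u) ≤ 2 * C ^ 2 * f u := by
  obtain ⟨p, hp, hpmax⟩ := isCompact_Icc.exists_isMaxOn (nonempty_Icc.2 hu.1)
    (hf.mono (Icc_subset_Icc_right hu.2))
  rw [isMaxOn_iff] at hpmax
  have hpI : p ∈ Icc a b := ⟨hp.1, hp.2.trans hu.2⟩
  have hfp : 0 < f p := ha.trans_le (hpmax a ⟨le_rfl, hu.1⟩)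
  obtain ⟨q, hq, hfq, hlt⟩ := exists_first_hit hu.2 (hf.mono (Icc_subset_Icc_left hu.1))
    ⟨hpmax u ⟨hu.1, le_rfl⟩, hmax p hpI⟩
  have hqmax : ∀ w ∈ Icc p q, f w ≤ f p := by
    intro w hw
    rcases le_total w u with hwu | huw
    · exact hpmax w ⟨hp.1.trans hw.1, hwu⟩
    · exact hw.2.eq_or_lt.elim (fun e => e ▸ hfq.le) fun hwq => (hlt w ⟨huw, hwq⟩).le
  have hlayer := h hfp hpI ⟨hu.1.trans hq.1, hq.2⟩ le_rfl hfq.ge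
    fun w hw => by linarith [hqmax w hw]
  have hclose : ∀ z ∈ Icc a u, dist (g z) (g p) ≤ C * f p := by
    intro z hz
    rcases le_total z p with hzp | hpz
    · exact h.dist_le_of_forall_le hC hf ha hpI (fun w hw => hpmax w ⟨hw.1, hw.2.trans hp.2⟩)
        ⟨hz.1, hzp⟩
    · exact (hlayer ⟨hpz, hz.2.trans hq.1⟩).2 ⟨le_rfl, hp.2.trans hq.1⟩
  calc diam (g '' Icc a u) ≤ C * f p + C * f p := by
        refine diam_le_of_forall_dist_le (by positivity) ?_
        rintro _ ⟨z, hz, rfl⟩ _ ⟨w, hw, rfl⟩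
        exact (dist_triangle_right _ _ (g p)).trans (add_le_add (hclose z hz) (hclose w hw))
    _ = 2 * C * f p := by ring
    _ ≤ 2 * C * (C * f u) := by gcongr; exact (hlayer ⟨hp.2, hq.1⟩).1
    _ = 2 * C ^ 2 * f u := by ring

lemma diam_image_Icc_right_le (h : HasLayerBound C g f (Icc a b)) (hC : 0 ≤ C)
    (hf : ContinuousOn f (Icc a b)) (hb : 0 < f b) (hmax : ∀ z ∈ Icc a b, f z ≤ f a)
    (hu : u ∈ Icc a b) : diam (g '' Icc u b) ≤ 2 * C ^ 2 * f u := by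
  have hIcc (c : α) :
      Icc (OrderDual.toDual b) (OrderDual.toDual c) = OrderDual.ofDual ⁻¹' Icc c b := Icc_toDual
  have hdual := diam_image_Icc_left_le (g := g ∘ OrderDual.ofDual) (f := f ∘ OrderDual.ofDual)
    (a := OrderDual.toDual b) (b := OrderDual.toDual a) (u := OrderDual.toDual u)
    (hIcc a ▸ h.dual) hC
    (hIcc a ▸ hf.comp continuous_ofDual.continuousOn (mapsTo_preimage _ _)) hb
    (fun z hz => hmax _ hz.symm) hu.symm
  rwa [hIcc, image_comp, image_preimage_eq _ OrderDual.ofDual.surjective] at hdual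

end HasLayerBound

end DyadicLayers

section Domains

variable {X : Type*} [MetricSpace X] {G : Set X}

lemma bdist_le_bdist_add_dist (G : Set X) (x y : X) : bdist G x ≤ bdist G y + dist x y :=
  infDist_le_infDist_add_dist

lemma bdist_pos (hG : IsOpen G) (hfr : (frontier G).Nonempty) {z : X} (hz : z ∈ G) :
    0 < bdist G z := by
  refine (isClosed_frontier.notMem_iff_infDist_pos hfr).1 fun hzf => ?_
  rw [hG.frontier_eq] at hzf
  exact hzf.2 hz

lemma QCSpace.preconnectedSpace {c : ℝ} (hX : QCSpace c X) : PreconnectedSpace X := by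
  refine ⟨isPreconnected_of_forall_pair fun x _ y _ => ?_⟩
  obtain ⟨γ, L, hγ, -⟩ := hX x y
  exact ⟨γ '' Icc 0 L, subset_univ _, ⟨0, left_mem_Icc.2 hγ.nonneg, hγ.source⟩,
    ⟨L, right_mem_Icc.2 hγ.nonneg, hγ.target⟩, isPreconnected_Icc.image _ hγ.lip.continuousOn⟩

lemma IsProperDomain.frontier_nonempty [PreconnectedSpace X] (hG : IsProperDomain G) :
    (frontier G).Nonempty :=
  nonempty_frontier_iff.2 ⟨hG.2.1.nonempty, hG.2.2⟩

end Domains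

section LogIntegrals

variable {m L : ℝ}

lemma intervalIntegrable_one_div_add (hm : 0 < m) (hL : 0 ≤ L) :
    IntervalIntegrable (fun t => 1 / (t + m)) MeasureTheory.volume 0 L :=
  ContinuousOn.intervalIntegrable_of_Icc hL <|
    continuousOn_const.div (by fun_prop) fun t ht => by linarith [ht.1]

lemma integral_one_div_add (hm : 0 < m) (hL : 0 ≤ L) :
    ∫ t in (0 : ℝ)..L, 1 / (t + m) = log (1 + L / m) := by
  rw [intervalIntegral.integral_comp_add_right (fun t => 1 / t) m,
    integral_one_div_of_pos (by linarith) (by linarith), zero_add, add_div, div_self hm.ne',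
    add_comm]

lemma intervalIntegrable_one_div_sub_add (hm : 0 < m) (hL : 0 ≤ L) :
    IntervalIntegrable (fun t => 1 / (L - t + m)) MeasureTheory.volume 0 L := by
  simpa using ((intervalIntegrable_one_div_add hm hL).comp_sub_left L).symm

lemma integral_one_div_sub_add (hm : 0 < m) (hL : 0 ≤ L) :
    ∫ t in (0 : ℝ)..L, 1 / (L - t + m) = log (1 + L / m) := by
  rw [intervalIntegral.integral_comp_sub_left (fun t => 1 / (t + m)) L]
  simpa only [sub_self, sub_zero] using integral_one_div_add hm hL

end LogIntegrals

section Curves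

variable {X : Type*} [MetricSpace X] {G : Set X} {γ : ℝ → X} {L : ℝ} {x y : X}

lemma qhLengthOn_nonneg {s t : ℝ} (hst : s ≤ t) : 0 ≤ qhLengthOn G γ s t :=
  intervalIntegral.integral_nonneg hst fun _ _ => one_div_nonneg.2 infDist_nonneg

lemma qhDist_nonneg (G : Set X) (x y : X) : 0 ≤ qhDist G x y := by
  refine Real.sInf_nonneg ?_
  rintro _ ⟨γ, L, hγ, rfl⟩
  exact qhLengthOn_nonneg hγ.nonneg

namespace CurveIn

lemma source_mem (hγ : CurveIn G γ L x y) : x ∈ G :=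
  hγ.source ▸ hγ.mem 0 (left_mem_Icc.2 hγ.nonneg)

lemma target_mem (hγ : CurveIn G γ L x y) : y ∈ G :=
  hγ.target ▸ hγ.mem L (right_mem_Icc.2 hγ.nonneg)

lemma subcurve (hγ : CurveIn G γ L x y) {s t : ℝ} (hs : 0 ≤ s) (hst : s ≤ t) (ht : t ≤ L) :
    CurveIn G (fun u => γ (u + s)) (t - s) (γ s) (γ t) where
  nonneg := by linarith
  lip := LipschitzOnWith.of_dist_le_mul fun u hu v hv => by
    simpa using hγ.lip.dist_le_mul (u + s) ⟨by linarith [hu.1], by linarith [hu.2]⟩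
      (v + s) ⟨by linarith [hv.1], by linarith [hv.2]⟩
  source := by simp
  target := by simp
  mem u hu := hγ.mem _ ⟨by linarith [hu.1], by linarith [hu.2]⟩

lemma dist_le (hγ : CurveIn G γ L x y) : dist x y ≤ L := by
  simpa [hγ.source, hγ.target, Real.dist_eq, abs_of_nonneg hγ.nonneg] using
    hγ.lip.dist_le_mul 0 (left_mem_Icc.2 hγ.nonneg) L (right_mem_Icc.2 hγ.nonneg)

lemma dist_source_le (hγ : CurveIn G γ L x y) {t : ℝ} (ht : t ∈ Icc 0 L) : dist x (γ t) ≤ t := by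
  simpa [hγ.source] using (hγ.subcurve le_rfl ht.1 ht.2).dist_le

lemma dist_target_le (hγ : CurveIn G γ L x y) {t : ℝ} (ht : t ∈ Icc 0 L) :
    dist y (γ t) ≤ L - t := by
  simpa [hγ.target, dist_comm] using (hγ.subcurve ht.1 ht.2 le_rfl).dist_le

lemma continuousOn_bdist (hγ : CurveIn G γ L x y) :
    ContinuousOn (fun t => bdist G (γ t)) (Icc 0 L) :=
  (continuous_infDist_pt _).comp_continuousOn hγ.lip.continuousOn

lemma intervalIntegrable_one_div_bdist (hγ : CurveIn G γ L x y) (hpos : ∀ z ∈ G, 0 < bdist G z) :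
    IntervalIntegrable (fun t => 1 / bdist G (γ t)) MeasureTheory.volume 0 L :=
  (continuousOn_const.div hγ.continuousOn_bdist fun t ht =>
    (hpos _ (hγ.mem t ht)).ne').intervalIntegrable_of_Icc hγ.nonneg

lemma qhDist_le_qhLength (hγ : CurveIn G γ L x y) : qhDist G x y ≤ qhLength G γ L := by
  refine csInf_le ⟨0, ?_⟩ ⟨γ, L, hγ, rfl⟩
  rintro _ ⟨γ, L, hγ, rfl⟩
  exact qhLengthOn_nonneg hγ.nonneg

lemma qhDist_le_qhLengthOn (hγ : CurveIn G γ L x y) {s t : ℝ} (hs : 0 ≤ s) (hst : s ≤ t)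
    (ht : t ≤ L) : qhDist G (γ s) (γ t) ≤ qhLengthOn G γ s t := by
  simpa [qhLength, qhLengthOn,
    intervalIntegral.integral_comp_add_right (fun u => (bdist G (γ u))⁻¹)] using
    (hγ.subcurve hs hst ht).qhDist_le_qhLength

lemma log_one_add_div_le_qhLength (hγ : CurveIn G γ L x y) (hpos : ∀ z ∈ G, 0 < bdist G z) :
    log (1 + L / bdist G x) ≤ qhLength G γ L := by
  have hx := hpos x hγ.source_mem
  rw [← integral_one_div_add hx hγ.nonneg]
  refine intervalIntegral.integral_mono_on hγ.nonneg (intervalIntegrable_one_div_add hx hγ.nonneg)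
    (hγ.intervalIntegrable_one_div_bdist hpos) fun t ht => ?_
  refine one_div_le_one_div_of_le (hpos _ (hγ.mem t ht)) ?_
  have hdepth := bdist_le_bdist_add_dist G (γ t) x
  rw [dist_comm] at hdepth
  linarith [hγ.dist_source_le ht]

lemma dist_le_exp_qhDist_sub_one_mul (hγ : CurveIn G γ L x y) (hpos : ∀ z ∈ G, 0 < bdist G z) :
    dist x y ≤ (exp (qhDist G x y) - 1) * bdist G x := by
  have hx := hpos x hγ.source_mem
  have hlog : log (1 + dist x y / bdist G x) ≤ qhDist G x y := by
    refine le_csInf ⟨_, γ, L, hγ, rfl⟩ ?_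
    rintro _ ⟨η, M, hη, rfl⟩
    refine le_trans ?_ (hη.log_one_add_div_le_qhLength hpos)
    gcongr
    exact hη.dist_le
  rw [log_le_iff_le_exp (by positivity)] at hlog
  rw [← div_le_iff₀ hx]
  linarith

lemma le_qhDist_of_mul_le_dist (hγ : CurveIn G γ L x y) (hpos : ∀ z ∈ G, 0 < bdist G z) {H R : ℝ}
    (hxR : bdist G x ≤ R) (hHR : (exp H - 1) * R ≤ dist x y) : H ≤ qhDist G x y := by
  have hR : 0 < R := (hpos x hγ.source_mem).trans_le hxR
  have hexp : (exp H - 1) * R ≤ (exp (qhDist G x y) - 1) * R := by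
    refine (hHR.trans (hγ.dist_le_exp_qhDist_sub_one_mul hpos)).trans ?_
    gcongr
    exact sub_nonneg.2 (one_le_exp (qhDist_nonneg _ _ _))
  exact exp_le_exp.1 (by linarith [le_of_mul_le_mul_right hexp hR])

lemma one_div_bdist_le (hγ : CurveIn G γ L x y) {b m t : ℝ} (hb : 0 ≤ b) (ht : t ∈ Icc 0 L)
    (hcone : min t (L - t) ≤ b * bdist G (γ t)) (hδ : 0 < bdist G (γ t)) (hm : 0 < m)
    (hmx : m ≤ bdist G x) (hmy : m ≤ bdist G y) :
    1 / bdist G (γ t) ≤ (1 + 2 * b) * (1 / (t + m) + 1 / (L - t + m)) := by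
  have hx := (bdist_le_bdist_add_dist G x (γ t)).trans (add_le_add_right (hγ.dist_source_le ht) _)
  have hy := (bdist_le_bdist_add_dist G y (γ t)).trans (add_le_add_right (hγ.dist_target_le ht) _)
  have ht₁ : 0 ≤ t := ht.1
  have ht₂ : 0 ≤ L - t := sub_nonneg.2 ht.2
  have : 0 ≤ min t (L - t) := le_min ht₁ ht₂
  have hmδ : m - bdist G (γ t) ≤ min t (L - t) := le_min (by linarith) (by linarith)
  calc 1 / bdist G (γ t) ≤ (1 + 2 * b) * (1 / (min t (L - t) + m)) := by
        rw [mul_one_div, div_le_div_iff₀ hδ (by positivity)]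
        linarith
    _ ≤ (1 + 2 * b) * (1 / (t + m) + 1 / (L - t + m)) := by
        gcongr
        rcases min_choice t (L - t) with h | h <;> rw [h]
        · exact le_add_of_nonneg_right (by positivity)
        · exact le_add_of_nonneg_left (by positivity)

lemma qhLength_le_of_cone (hγ : CurveIn G γ L x y) (hpos : ∀ z ∈ G, 0 < bdist G z) {b m : ℝ}
    (hb : 0 ≤ b) (hcone : ∀ t ∈ Icc 0 L, min t (L - t) ≤ b * bdist G (γ t)) (hm : 0 < m)
    (hmx : m ≤ bdist G x) (hmy : m ≤ bdist G y) :
    qhLength G γ L ≤ 2 * (1 + 2 * b) * log (1 + L / m) := by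
  have hleft := intervalIntegrable_one_div_add hm hγ.nonneg
  have hright := intervalIntegrable_one_div_sub_add hm hγ.nonneg
  calc qhLength G γ L ≤ ∫ t in (0 : ℝ)..L, (1 + 2 * b) * (1 / (t + m) + 1 / (L - t + m)) :=
        intervalIntegral.integral_mono_on hγ.nonneg (hγ.intervalIntegrable_one_div_bdist hpos)
          ((hleft.add hright).const_mul _) fun t ht =>
            hγ.one_div_bdist_le hb ht (hcone t ht) (hpos _ (hγ.mem t ht)) hm hmx hmy
    _ = 2 * (1 + 2 * b) * log (1 + L / m) := by
        rw [intervalIntegral.integral_const_mul, intervalIntegral.integral_add hleft hright,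
          integral_one_div_add hm hγ.nonneg, integral_one_div_sub_add hm hγ.nonneg]
        ring

lemma sum_qhDist_le_qhLength (hγ : CurveIn G γ L x y) (hpos : ∀ z ∈ G, 0 < bdist G z) {n : ℕ}
    {u : ℕ → ℝ} (hmono : ∀ i < n, u i ≤ u (i + 1)) (hmem : ∀ i ≤ n, u i ∈ Icc 0 L) :
    ∑ i ∈ Finset.range n, qhDist G (γ (u i)) (γ (u (i + 1))) ≤ qhLength G γ L := by
  have hint := hγ.intervalIntegrable_one_div_bdist hpos
  have hu : u 0 ≤ u n := by
    rw [← sub_nonneg, ← Finset.sum_range_sub]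
    exact Finset.sum_nonneg fun i hi => sub_nonneg.2 (hmono i (Finset.mem_range.1 hi))
  calc ∑ i ∈ Finset.range n, qhDist G (γ (u i)) (γ (u (i + 1)))
      ≤ ∑ i ∈ Finset.range n, qhLengthOn G γ (u i) (u (i + 1)) :=
        Finset.sum_le_sum fun i hi => by
          have hi := Finset.mem_range.1 hi
          exact hγ.qhDist_le_qhLengthOn (hmem i hi.le).1 (hmono i hi) (hmem (i + 1) hi).2
    _ = qhLengthOn G γ (u 0) (u n) :=
        intervalIntegral.sum_integral_adjacent_intervals fun i hi => hint.mono_set <| by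
          rw [uIcc_of_le hγ.nonneg]
          exact uIcc_subset_Icc (hmem i hi.le) (hmem (i + 1) hi)
    _ ≤ qhLength G γ L :=
        intervalIntegral.integral_mono_interval (hmem 0 n.zero_le).1 hu (hmem n le_rfl).2
          (Eventually.of_forall fun _ => one_div_nonneg.2 infDist_nonneg) hint

lemma sum_qhDist_le_coarseQHLength (hγ : CurveIn G γ L x y) (hpos : ∀ z ∈ G, 0 < bdist G z)
    {s t h : ℝ} (hs : 0 ≤ s) (ht : t ≤ L) {n : ℕ} (hn : 0 < n) {u : ℕ → ℝ}
    (hmono : ∀ i < n, u i ≤ u (i + 1)) (hmem : ∀ i ≤ n, u i ∈ Icc s t)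
    (hstep : ∀ i < n, h ≤ qhDist G (γ (u i)) (γ (u (i + 1)))) :
    ∑ i ∈ Finset.range n, qhDist G (γ (u i)) (γ (u (i + 1))) ≤ coarseQHLength G γ s t h := by
  refine le_csSup ⟨qhLength G γ L, ?_⟩ ⟨n, hn, u, hmono, hmem, hstep, rfl⟩
  rintro _ ⟨k, -, v, hvmono, hvmem, -, rfl⟩
  exact hγ.sum_qhDist_le_qhLength hpos hvmono fun i hi => Icc_subset_Icc hs ht (hvmem i hi)

end CurveIn

lemma IsUniform.qhDist_le {b m : ℝ} (hU : IsUniform b G) (hpos : ∀ z ∈ G, 0 < bdist G z)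
    (hb : 0 ≤ b) (hx : x ∈ G) (hy : y ∈ G) (hm : 0 < m) (hmx : m ≤ bdist G x)
    (hmy : m ≤ bdist G y) :
    qhDist G x y ≤ 2 * (1 + 2 * b) * log (1 + b * (dist x y / m)) := by
  obtain ⟨γ, L, hγ, hL, hcone⟩ := hU x hx y hy
  have hL0 := hγ.nonneg
  calc qhDist G x y ≤ qhLength G γ L := hγ.qhDist_le_qhLength
    _ ≤ 2 * (1 + 2 * b) * log (1 + L / m) := hγ.qhLength_le_of_cone hpos hb hcone hm hmx hmy
    _ ≤ 2 * (1 + 2 * b) * log (1 + b * (dist x y / m)) := by rw [← mul_div_assoc]; gcongr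

end Curves

lemma le_of_le_add_mul_log {A B b x : ℝ} (hB : 0 ≤ B) (hb : 0 ≤ b) (hx : 0 ≤ x)
    (h : x ≤ A + B * log (1 + b * x)) : x ≤ 2 * (A + B * log (1 + 2 * B * b)) := by
  set E := 1 + 2 * B * b with hE
  have hE0 : 0 < E := by positivity
  have hlog : log (1 + b * x) ≤ (1 + b * x) / E - 1 + log E := by
    have := log_le_sub_one_of_pos (x := (1 + b * x) / E) (by positivity)
    rw [log_div (by positivity) hE0.ne'] at this
    linarith
  have hlin : B * ((1 + b * x) / E) ≤ B + x / 2 := by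
    rw [← mul_div_assoc, div_le_iff₀ hE0, hE]
    have : 0 ≤ B * (B * b) := by positivity
    linarith
  linarith [mul_le_mul_of_nonneg_left hlog hB]

section SolidArcs

variable {X : Type*} [MetricSpace X] {G : Set X} {γ : ℝ → X} {L ν h s t : ℝ} {x y : X}

/-- The bound on `dist (γ s) (γ t) / r` for a `(ν, h)`-solid arc `γ` in a `b`-uniform domain with
depth at least `r` at the times `s` and `t` and at most `2 * r` in between. It is obtained by
counting quasihyperbolic steps of size `h + 1`. -/
noncomputable def solidChordConst (b ν h : ℝ) : ℝ :=
  let A := 2 * (exp (h + 1) - 1)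
  let B := A * (ν * (2 * (1 + 2 * b)) / (h + 1))
  2 * (A + B * log (1 + 2 * B * b))

/-- The bound on the quasihyperbolic distance of any two points of the piece `γ[s, t]` of an arc
as in `solidChordConst`. -/
noncomputable def solidQHConst (b ν h : ℝ) : ℝ :=
  max h (ν * (2 * (1 + 2 * b) * log (1 + b * solidChordConst b ν h)))

namespace SolidArc

lemma sum_qhDist_le (hsol : SolidArc G γ L ν h) (hγ : CurveIn G γ L x y)
    (hpos : ∀ z ∈ G, 0 < bdist G z) (hs : 0 ≤ s) (hst : s ≤ t) (ht : t ≤ L) {n : ℕ} (hn : 0 < n)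
    {u : ℕ → ℝ} (hmono : ∀ i < n, u i ≤ u (i + 1)) (hmem : ∀ i ≤ n, u i ∈ Icc s t)
    (hstep : ∀ i < n, h ≤ qhDist G (γ (u i)) (γ (u (i + 1)))) :
    ∑ i ∈ Finset.range n, qhDist G (γ (u i)) (γ (u (i + 1))) ≤ ν * qhDist G (γ s) (γ t) :=
  (hγ.sum_qhDist_le_coarseQHLength hpos hs ht hn hmono hmem hstep).trans (hsol s t hs hst ht)

lemma qhDist_le_max (hsol : SolidArc G γ L ν h) (hγ : CurveIn G γ L x y)
    (hpos : ∀ z ∈ G, 0 < bdist G z) (hs : 0 ≤ s) (ht : t ≤ L) {p q : ℝ} (hsp : s ≤ p)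
    (hpq : p ≤ q) (hqt : q ≤ t) :
    qhDist G (γ p) (γ q) ≤ max h (ν * qhDist G (γ s) (γ t)) := by
  rcases le_total (qhDist G (γ p) (γ q)) h with hle | hle
  · exact hle.trans (le_max_left _ _)
  refine le_max_of_le_right ?_
  have hpair := hsol.sum_qhDist_le hγ hpos hs (hsp.trans (hpq.trans hqt)) ht one_pos
    (u := fun i => if i = 0 then p else q) (by simpa using hpq)
    (fun i _ => by
      split_ifs
      exacts [⟨hsp, hpq.trans hqt⟩, ⟨hsp.trans hpq, hqt⟩])
    (by simpa using hle)
  simpa using hpair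

lemma nat_mul_le_of_depth_le (hsol : SolidArc G γ L ν h) (hγ : CurveIn G γ L x y)
    (hpos : ∀ z ∈ G, 0 < bdist G z) (hν : 0 ≤ ν) (hs : 0 ≤ s) (hst : s ≤ t) (ht : t ≤ L)
    {H R : ℝ} (hH : 0 ≤ H) (hhH : h ≤ H) (hR : 0 < R) (hdepth : ∀ z ∈ Icc s t, bdist G (γ z) ≤ R)
    {n : ℕ} (hn : n * ((exp H - 1) * R) ≤ dist (γ s) (γ t)) :
    n * H ≤ ν * qhDist G (γ s) (γ t) := by
  rcases n.eq_zero_or_pos with rfl | hn0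
  · simpa using mul_nonneg hν (qhDist_nonneg _ _ _)
  have hd : 0 ≤ (exp H - 1) * R := mul_nonneg (sub_nonneg.2 (one_le_exp hH)) hR.le
  have hcont : ContinuousOn (fun z => dist (γ s) (γ z)) (Icc s t) :=
    by
    have := hγ.lip.continuousOn.mono (Icc_subset_Icc hs ht)
    fun_prop
  obtain ⟨u, hu, humem, huval⟩ := exists_monotoneOn_rightInvOn hst hcont
  have hlevel : ∀ i ≤ n,
      (i : ℝ) * ((exp H - 1) * R) ∈ Icc (dist (γ s) (γ s)) (dist (γ s) (γ t)) := fun i hi => by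
    rw [dist_self]
    exact ⟨by positivity, le_trans (by gcongr) hn⟩
  set τ : ℕ → ℝ := fun i => u (i * ((exp H - 1) * R))
  have hmem : ∀ i ≤ n, τ i ∈ Icc s t := fun i hi => humem (hlevel i hi)
  have hmono : ∀ i < n, τ i ≤ τ (i + 1) := fun i hi =>
    hu (hlevel i hi.le) (hlevel (i + 1) hi) (by push_cast; linarith)
  have hstep : ∀ i < n, H ≤ qhDist G (γ (τ i)) (γ (τ (i + 1))) := by
    intro i hi
    have hval : dist (γ s) (γ (τ i)) = i * ((exp H - 1) * R) := huval (hlevel i hi.le)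
    have hval' : dist (γ s) (γ (τ (i + 1))) = (i + 1 : ℕ) * ((exp H - 1) * R) :=
      huval (hlevel (i + 1) hi)
    have hsub := hγ.subcurve (hs.trans (hmem i hi.le).1) (hmono i hi) ((hmem (i + 1) hi).2.trans ht)
    refine hsub.le_qhDist_of_mul_le_dist hpos (hdepth _ (hmem i hi.le)) ?_
    have := dist_triangle (γ s) (γ (τ i)) (γ (τ (i + 1)))
    push_cast at hval'
    linarith
  calc (n : ℝ) * H = ∑ _i ∈ Finset.range n, H := by simp
    _ ≤ ∑ i ∈ Finset.range n, qhDist G (γ (τ i)) (γ (τ (i + 1))) :=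
        Finset.sum_le_sum fun i hi => hstep i (Finset.mem_range.1 hi)
    _ ≤ ν * qhDist G (γ s) (γ t) :=
        hsol.sum_qhDist_le hγ hpos hs hst ht hn0 hmono hmem fun i hi => hhH.trans (hstep i hi)

lemma dist_le_of_depth_le (hsol : SolidArc G γ L ν h) (hγ : CurveIn G γ L x y)
    (hpos : ∀ z ∈ G, 0 < bdist G z) (hν : 0 ≤ ν) (hs : 0 ≤ s) (hst : s ≤ t) (ht : t ≤ L)
    {H R : ℝ} (hH : 0 < H) (hhH : h ≤ H) (hR : 0 < R)
    (hdepth : ∀ z ∈ Icc s t, bdist G (γ z) ≤ R) :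
    dist (γ s) (γ t) ≤ (exp H - 1) * R * (1 + ν * qhDist G (γ s) (γ t) / H) := by
  have hd : 0 < (exp H - 1) * R := mul_pos (sub_pos.2 (one_lt_exp_iff.2 hH)) hR
  set n := ⌊dist (γ s) (γ t) / ((exp H - 1) * R)⌋₊
  have hn : (n : ℝ) ≤ ν * qhDist G (γ s) (γ t) / H := by
    rw [le_div_iff₀ hH]
    refine hsol.nat_mul_le_of_depth_le hγ hpos hν hs hst ht hH.le hhH hR hdepth ?_
    rw [← le_div_iff₀ hd]
    exact Nat.floor_le (by positivity)
  rw [← div_le_iff₀' hd]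
  linarith [Nat.lt_floor_add_one (dist (γ s) (γ t) / ((exp H - 1) * R))]

variable {b r : ℝ}

lemma dist_div_le_solidChordConst (hsol : SolidArc G γ L ν h) (hγ : CurveIn G γ L x y)
    (hpos : ∀ z ∈ G, 0 < bdist G z) (hU : IsUniform b G) (hb : 0 ≤ b) (hν : 0 ≤ ν) (hh : 0 ≤ h)
    (hr : 0 < r) (hs : 0 ≤ s) (hst : s ≤ t) (ht : t ≤ L) (hrs : r ≤ bdist G (γ s))
    (hrt : r ≤ bdist G (γ t)) (hdepth : ∀ z ∈ Icc s t, bdist G (γ z) ≤ 2 * r) :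
    dist (γ s) (γ t) / r ≤ solidChordConst b ν h := by
  have hH : 0 < h + 1 := by linarith
  have hE : 0 < exp (h + 1) - 1 := sub_pos.2 (one_lt_exp_iff.2 hH)
  have hsub := hγ.subcurve hs hst ht
  refine le_of_le_add_mul_log (by positivity) hb (by positivity) ?_
  rw [div_le_iff₀ hr]
  calc dist (γ s) (γ t)
      ≤ (exp (h + 1) - 1) * (2 * r) * (1 + ν * qhDist G (γ s) (γ t) / (h + 1)) :=
        hsol.dist_le_of_depth_le hγ hpos hν hs hst ht hH (by linarith) (by positivity) hdepth
    _ ≤ (exp (h + 1) - 1) * (2 * r) *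
          (1 + ν * (2 * (1 + 2 * b) * log (1 + b * (dist (γ s) (γ t) / r))) / (h + 1)) := by
        gcongr
        exact hU.qhDist_le hpos hb hsub.source_mem hsub.target_mem hr hrs hrt
    _ = _ := by ring

lemma qhDist_le_solidQHConst (hsol : SolidArc G γ L ν h) (hγ : CurveIn G γ L x y)
    (hpos : ∀ z ∈ G, 0 < bdist G z) (hU : IsUniform b G) (hb : 0 ≤ b) (hν : 0 ≤ ν) (hh : 0 ≤ h)
    (hr : 0 < r) (hs : 0 ≤ s) (ht : t ≤ L) (hrs : r ≤ bdist G (γ s))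
    (hrt : r ≤ bdist G (γ t)) (hdepth : ∀ z ∈ Icc s t, bdist G (γ z) ≤ 2 * r) {p q : ℝ}
    (hsp : s ≤ p) (hpq : p ≤ q) (hqt : q ≤ t) :
    qhDist G (γ p) (γ q) ≤ solidQHConst b ν h := by
  have hst : s ≤ t := hsp.trans (hpq.trans hqt)
  have hsub := hγ.subcurve hs hst ht
  refine (hsol.qhDist_le_max hγ hpos hs ht hsp hpq hqt).trans (max_le_max_left h ?_)
  gcongr
  refine (hU.qhDist_le hpos hb hsub.source_mem hsub.target_mem hr hrs hrt).trans ?_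
  gcongr
  exact hsol.dist_div_le_solidChordConst hγ hpos hU hb hν hh hr hs hst ht hrs hrt hdepth

lemma hasLayerBound (hsol : SolidArc G γ L ν h) (hγ : CurveIn G γ L x y)
    (hpos : ∀ z ∈ G, 0 < bdist G z) (hU : IsUniform b G) (hb : 0 ≤ b) (hν : 0 ≤ ν) (hh : 0 ≤ h) :
    HasLayerBound (2 * exp (solidQHConst b ν h)) γ (fun t => bdist G (γ t)) (Icc 0 L) := by
  intro r hr s hs t ht hrs hrt hdepth z hz
  set K := solidQHConst b ν h
  have hK : 1 ≤ exp K := one_le_exp (hh.trans (le_max_left _ _))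
  have hdist : ∀ p q, s ≤ p → p ≤ q → q ≤ t →
      dist (γ p) (γ q) ≤ (exp K - 1) * bdist G (γ p) := by
    intro p q hsp hpq hqt
    have hsub := hγ.subcurve (hs.1.trans hsp) hpq (hqt.trans ht.2)
    refine (hsub.dist_le_exp_qhDist_sub_one_mul hpos).trans ?_
    have hδ := hpos _ hsub.source_mem
    gcongr
    exact hsol.qhDist_le_solidQHConst hγ hpos hU hb hν hh hr hs.1 ht.2 hrs hrt hdepth hsp hpq hqt
  have hdist' : ∀ p q, s ≤ p → p ≤ q → q ≤ t → dist (γ p) (γ q) ≤ 2 * exp K * r := by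
    intro p q hsp hpq hqt
    have := mul_le_mul_of_nonneg_left (hdepth p ⟨hsp, hpq.trans hqt⟩) (sub_nonneg.2 hK)
    linarith [hdist p q hsp hpq hqt]
  refine ⟨?_, fun w hw => ?_⟩
  · have hzt := bdist_le_bdist_add_dist G (γ t) (γ z)
    rw [dist_comm] at hzt
    have : 0 ≤ exp K * bdist G (γ z) := mul_nonneg (exp_pos K).le infDist_nonneg
    linarith [hdist z t hz.1 hz.2 le_rfl]
  · rcases le_total z w with hzw | hwz
    · exact hdist' z w hz.1 hzw hw.2
    · exact dist_comm (γ z) (γ w) ▸ hdist' w z hw.1 hwz hz.2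

end SolidArc

end SolidArcs

theorem stmt9_general (b ν h : ℝ) (hb : 0 ≤ b) (hν : 0 ≤ ν) (hh : 0 ≤ h) :
    ∃ μ₂ : ℝ, 1 ≤ μ₂ ∧
      ∀ (X : Type*) [MetricSpace X] (G : Set X), IsOpen G → (frontier G).Nonempty →
        IsUniform b G → ∀ (x y : X) (γ : ℝ → X) (L : ℝ), CurveIn G γ L x y →
          SolidArc G γ L ν h →
          ∀ t₀ ∈ Icc 0 L, (∀ t ∈ Icc 0 L, bdist G (γ t) ≤ bdist G (γ t₀)) →
            (∀ u ∈ Icc 0 t₀, diam (γ '' Icc 0 u) ≤ μ₂ * bdist G (γ u)) ∧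
            (∀ v ∈ Icc t₀ L, diam (γ '' Icc v L) ≤ μ₂ * bdist G (γ v)) := by
  set C := 2 * exp (solidQHConst b ν h)
  have hC : 1 ≤ C := by linarith [one_le_exp (hh.trans (le_max_left _ _) : 0 ≤ solidQHConst b ν h)]
  refine ⟨2 * C ^ 2, by linarith [one_le_pow₀ hC (n := 2)], ?_⟩
  intro X _ G hG hfr hU x y γ L hγ hsol t₀ ht₀ hmax
  have hpos : ∀ z ∈ G, 0 < bdist G z := fun z hz => bdist_pos hG hfr hz
  have hlayer := hsol.hasLayerBound hγ hpos hU hb hν hh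
  have hleft : Icc 0 t₀ ⊆ Icc 0 L := Icc_subset_Icc_right ht₀.2
  have hright : Icc t₀ L ⊆ Icc 0 L := Icc_subset_Icc_left ht₀.1
  exact ⟨fun u hu => (hlayer.mono hleft).diam_image_Icc_left_le (by positivity)
      (hγ.continuousOn_bdist.mono hleft) (hpos _ (hγ.mem 0 (left_mem_Icc.2 hγ.nonneg)))
      (fun z hz => hmax z (hleft hz)) hu,
    fun v hv => (hlayer.mono hright).diam_image_Icc_right_le (by positivity)
      (hγ.continuousOn_bdist.mono hright) (hpos _ (hγ.mem L (right_mem_Icc.2 hγ.nonneg)))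
      (fun z hz => hmax z (hright hz)) hv⟩

/-- Lemma 5(1): There is a constant `μ₂ = μ₂(b,ν,h) ≥ 1` such that
for any `(ν,h)`-solid arc `γ` with endpoints `x, y` in a `b`-uniform proper domain
`G` of a `c`-quasiconvex space, with `x₀ = γ t₀` a point of `γ` maximizing
`δ_G`, one has `diam(γ[x,u]) ≤ μ₂δ_G(u)` for `u ∈ γ[x,x₀]` and
`diam(γ[y,v]) ≤ μ₂δ_G(v)` for `v ∈ γ[y,x₀]`. -/
theorem stmt9 (b ν h : ℝ) (hb : 1 ≤ b) (hν : 1 ≤ ν) (hh : 0 ≤ h) :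
    ∃ μ₂ : ℝ, 1 ≤ μ₂ ∧
      ∀ (X : Type) [MetricSpace X] (c : ℝ), 1 ≤ c → QCSpace c X →
        ∀ G : Set X, IsProperDomain G → IsUniform b G →
          ∀ (x y : X) (γ : ℝ → X) (L : ℝ), CurveIn G γ L x y →
            SolidArc G γ L ν h →
            ∀ t₀ ∈ Set.Icc 0 L,
              (∀ t ∈ Set.Icc 0 L, bdist G (γ t) ≤ bdist G (γ t₀)) →
              (∀ u ∈ Set.Icc 0 t₀,
                  Metric.diam (γ '' Set.Icc 0 u) ≤ μ₂ * bdist G (γ u)) ∧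
              (∀ v ∈ Set.Icc t₀ L,
                  Metric.diam (γ '' Set.Icc v L) ≤ μ₂ * bdist G (γ v)) := by
  obtain ⟨μ₂, hμ₂, hdiam⟩ := stmt9_general b ν h (by linarith) (by linarith) hh
  refine ⟨μ₂, hμ₂, fun X _ c _ hX G hG => ?_⟩
  have := hX.preconnectedSpace
  exact hdiam X G hG.1 hG.frontier_nonempty
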